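/- arXiv:2511.22600 — 4 statements merged into one kernel-verified Lean document; each statement's English description precedes it below -/
import Mathlib

section
/- Let K be a field and let v, w be nontrivial valuations on K with values in ℝ≥0 which are not equivalent. Then there exists f ∈ K with v(f) ≤ 1 and w(f) > 1 (equivalently, f lies in the valuation subring of v but not in that of w). -/
open scoped NNReal

/-!
The valuation ring of a valuation `v` of rank at most one is maximal among the proper subrings
of `K`: once a subring contains it together with some `x` such that `1 < v x`, every `y`
belongs to the subring, because the Archimedean property gives `v (y / x ^ n) ≤ 1` for some `n`,
and `y = y / x ^ n * x ^ n`. The valuation ring of a nontrivial `w` is a proper subring, so it can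
contain that of `v` only by being equal to it, and then `v` and `w` are equivalent.
-/

section ValuationRing

variable {K Γ₀ Γ₀' : Type*} [DivisionRing K]
  [LinearOrderedCommGroupWithZero Γ₀] [LinearOrderedCommGroupWithZero Γ₀']

lemma exists_div_pow_mem_integer [MulArchimedean Γ₀] (v : Valuation K Γ₀) {x : K}
    (hx : 1 < v x) (y : K) : ∃ n : ℕ, y / x ^ n ∈ v.integer := by
  obtain ⟨n, hn⟩ := MulArchimedean.arch (v y) hx
  refine ⟨n, ?_⟩
  rw [Valuation.mem_integer_iff, map_div₀, map_pow]
  exact div_le_one_of_le₀ hn zero_le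

lemma eq_top_of_integer_lt [MulArchimedean Γ₀] {v : Valuation K Γ₀} {R : Subring K}
    (hR : v.integer < R) : R = ⊤ := by
  obtain ⟨hle, x, hxR, hxv⟩ := SetLike.lt_iff_le_and_exists.mp hR
  have hx : 1 < v x := not_le.mp hxv
  have hx₀ : x ≠ 0 := v.ne_zero_iff.mp (zero_lt_one.trans hx).ne'
  refine (Subring.eq_top_iff' R).mpr fun y ↦ ?_
  obtain ⟨n, hn⟩ := exists_div_pow_mem_integer v hx y
  rw [← div_mul_cancel₀ y (pow_ne_zero n hx₀)]
  exact R.mul_mem (hle hn) (R.pow_mem hxR n)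

lemma integer_ne_top (w : Valuation K Γ₀') [w.IsNontrivial] : w.integer ≠ ⊤ := by
  obtain ⟨y, hy⟩ := Valuation.IsNontrivial.exists_one_lt (v := w)
  exact fun htop ↦ hy.not_ge ((Subring.eq_top_iff' _).mp htop y)

lemma isEquiv_of_integer_eq {v : Valuation K Γ₀} {w : Valuation K Γ₀'}
    (h : v.integer = w.integer) : v.IsEquiv w :=
  Valuation.isEquiv_of_val_le_one (SetLike.ext_iff.mp h)

lemma isEquiv_of_integer_le [MulArchimedean Γ₀] {v : Valuation K Γ₀} {w : Valuation K Γ₀'}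
    [w.IsNontrivial] (h : v.integer ≤ w.integer) : v.IsEquiv w :=
  isEquiv_of_integer_eq <| h.eq_of_not_lt fun hlt ↦ integer_ne_top w (eq_top_of_integer_lt hlt)

theorem exists_separating_element_of_not_isEquiv_general [MulArchimedean Γ₀]
    (v : Valuation K Γ₀) (w : Valuation K Γ₀') [w.IsNontrivial] (h : ¬ v.IsEquiv w) :
    ∃ f : K, v f ≤ 1 ∧ 1 < w f := by
  obtain ⟨f, hfv, hfw⟩ := SetLike.not_le_iff_exists.mp (mt isEquiv_of_integer_le h)
  exact ⟨f, hfv, not_le.mp hfw⟩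

end ValuationRing

/-- Let `K` be a field and `v`, `w` nontrivial valuations on `K` with values in `ℝ≥0`
which are not equivalent.  Then there exists `f ∈ K` with `v f ≤ 1` and `w f > 1`,
i.e. `f` lies in the valuation subring of `v` but not in that of `w`. -/
theorem exists_separating_element_of_not_isEquiv
    {K : Type*} [Field K] (v w : Valuation K ℝ≥0)
    (hv : ∃ x : K, x ≠ 0 ∧ v x ≠ 1)
    (hw : ∃ x : K, x ≠ 0 ∧ w x ≠ 1)
    (h : ¬ v.IsEquiv w) :
    ∃ f : K, v f ≤ 1 ∧ 1 < w f :=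
  have : w.IsNontrivial := ⟨hw.imp fun _ ↦ .imp_left w.ne_zero_iff.mpr⟩
  exists_separating_element_of_not_isEquiv_general v w h
end

section
/- Let M be a commutative monoid and let v, w : M → [0,∞] be functions satisfying v(xy) = v(x) + v(y) and w(xy) = w(x) + w(y) for all x, y ∈ M, and such that w(x) = ∞ whenever v(x) = ∞. Then lim_{m→∞} (1/m)·⨅{ w(x) : x ∈ M, v(x) ≥ m } = ⨅{ w(x)/v(x) : x ∈ M, 0 < v(x) < ∞ }, where both sides are taken in [0,∞], the infimum of the empty set is ∞, and division is in the extended nonnegative reals. -/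
open scoped ENNReal
open Filter
open scoped Topology

/-!
Write `L` for the infimum of the ratios. If `t ≤ v x`, then either `v x = ∞`, so `w x = ∞`, or
`L * t ≤ (w x / v x) * v x = w x`; hence `L` is a lower bound. Conversely, if `0 < v x < ∞`, the
`n`-th power of `x` with `n = ⌊t / v x⌋ + 1` lies in `{t ≤ v}`, and the value of `w` at this power
is at most `(t / v x + 1) * w x`; dividing by `t` and letting `t → ∞` leaves `w x / v x`.
-/

section Superlevel

variable {M α β : Type*} [LE α]

/-- The infimum of `w` over the superlevel set `{x | t ≤ v x}`. When `v` is a valuation, this is the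
order `w(𝔞_{v,t})` of its valuation ideal; only the underlying set of the ideal is recorded. -/
def superlevelInf [InfSet β] (v : M → α) (w : M → β) (t : α) : β :=
  ⨅ x ∈ {x : M | t ≤ v x}, w x

theorem superlevelInf_le [CompleteLattice β] {v : M → α} (w : M → β) {t : α} {x : M}
    (hx : t ≤ v x) : superlevelInf v w t ≤ w x :=
  iInf₂_le x hx

theorem le_superlevelInf [CompleteLattice β] {v : M → α} {w : M → β} {t : α} {b : β}
    (h : ∀ x, t ≤ v x → b ≤ w x) : b ≤ superlevelInf v w t :=
  le_iInf₂ h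

end Superlevel

theorem exists_nsmul_le_and_le_nsmul {M α β : Type*} [Mul M]
    [AddMonoid α] [Preorder α] [AddRightMono α] [AddMonoid β] [Preorder β] [AddRightMono β]
    {v : M → α} {w : M → β} (hv : ∀ x y, v x + v y ≤ v (x * y))
    (hw : ∀ x y, w (x * y) ≤ w x + w y) (x : M) {n : ℕ} (hn : 1 ≤ n) :
    ∃ y, n • v x ≤ v y ∧ w y ≤ n • w x := by
  -- The witness is the left-nested power `((x * x) * x) * ⋯`.
  induction n, hn using Nat.le_induction with
  | base => exact ⟨x, by simp only [one_nsmul, le_refl, and_self]⟩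
  | succ n _ ih =>
    obtain ⟨y, hvy, hwy⟩ := ih
    refine ⟨y * x, ?_, ?_⟩
    · calc (n + 1) • v x = n • v x + v x := succ_nsmul _ _
        _ ≤ v y + v x := by gcongr
        _ ≤ v (y * x) := hv y x
    · calc w (y * x) ≤ w y + w x := hw y x
        _ ≤ n • w x + w x := by gcongr
        _ = (n + 1) • w x := (succ_nsmul _ _).symm

theorem exists_nat_le_and_le_add_one {r : ℝ≥0∞} (hr : r ≠ ⊤) :
    ∃ n : ℕ, (n : ℝ≥0∞) ≤ r ∧ r ≤ n + 1 := by
  lift r to NNReal using hr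
  exact ⟨⌊r⌋₊, mod_cast Nat.floor_le r.2, mod_cast (Nat.lt_floor_add_one r).le⟩

section Ratio

variable {M : Type*} {v w : M → ℝ≥0∞}

theorem iInf_ratio_mul_le_superlevelInf (hvw : ∀ x, v x = ⊤ → w x = ⊤) (t : ℝ≥0∞) :
    (⨅ x ∈ {x : M | 0 < v x ∧ v x < ⊤}, w x / v x) * t ≤ superlevelInf v w t := by
  refine le_superlevelInf fun x hx => ?_
  rcases eq_or_ne (v x) ⊤ with h_top | h_top
  · exact le_top.trans_eq (hvw x h_top).symm
  rcases eq_or_ne (v x) 0 with h_zero | h_zero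
  · have ht : t = 0 := le_zero_iff.1 (hx.trans_eq h_zero)
    simp only [ht, mul_zero, zero_le]
  calc (⨅ x ∈ {x : M | 0 < v x ∧ v x < ⊤}, w x / v x) * t
      ≤ w x / v x * v x := mul_le_mul' (iInf₂_le x ⟨h_zero.pos, h_top.lt_top⟩) hx
    _ = w x := ENNReal.div_mul_cancel h_zero h_top

variable [Mul M]

theorem superlevelInf_le_div_add_one_mul (hv : ∀ x y, v x + v y ≤ v (x * y))
    (hw : ∀ x y, w (x * y) ≤ w x + w y) {x : M} (hx : v x ≠ 0) {t : ℝ≥0∞} (ht : t ≠ ⊤) :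
    superlevelInf v w t ≤ (t / v x + 1) * w x := by
  obtain ⟨n, hn_le, hle_n⟩ := exists_nat_le_and_le_add_one (ENNReal.div_ne_top ht hx)
  obtain ⟨y, hvy, hwy⟩ := exists_nsmul_le_and_le_nsmul hv hw x n.succ_pos
  have hty : t ≤ v y := calc
    t ≤ (n + 1) * v x :=
      (ENNReal.div_le_iff_le_mul (.inl hx) (.inr (by positivity))).1 hle_n
    _ = (n + 1) • v x := by rw [nsmul_eq_mul, Nat.cast_succ]
    _ ≤ v y := hvy
  calc superlevelInf v w t ≤ w y := superlevelInf_le w hty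
    _ ≤ (n + 1) • w x := hwy
    _ = (n + 1) * w x := by rw [nsmul_eq_mul, Nat.cast_succ]
    _ ≤ (t / v x + 1) * w x := by gcongr

theorem superlevelInf_div_le_ratio_add (hv : ∀ x y, v x + v y ≤ v (x * y))
    (hw : ∀ x y, w (x * y) ≤ w x + w y) {x : M} (hx : v x ≠ 0) {t : ℝ≥0∞} (ht : t ≠ ⊤)
    (ht₀ : t ≠ 0) :
    superlevelInf v w t / t ≤ w x / v x + w x / t := by
  refine ENNReal.div_le_of_le_mul ?_
  calc superlevelInf v w t ≤ (t / v x + 1) * w x := superlevelInf_le_div_add_one_mul hv hw hx ht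
    _ = w x / v x * t + w x := by simp only [div_eq_mul_inv]; ring
    _ = (w x / v x + w x / t) * t := by rw [add_mul, ENNReal.div_mul_cancel ht₀ ht]

theorem eventually_superlevelInf_div_lt (hv : ∀ x y, v x + v y ≤ v (x * y))
    (hw : ∀ x y, w (x * y) ≤ w x + w y) {x : M} (hx : v x ≠ 0) (hx_top : v x ≠ ⊤) {b : ℝ≥0∞}
    (hb : w x / v x < b) : ∀ᶠ t in 𝓝[≠] ⊤, superlevelInf v w t / t < b := by
  have hwx : w x ≠ ⊤ := by
    intro h
    rw [h, ENNReal.top_div_of_ne_top hx_top] at hb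
    exact not_top_lt hb
  have hlim : Tendsto (fun t => w x / v x + w x / t) (𝓝 ⊤) (𝓝 (w x / v x)) := by
    simpa only [id_eq, ENNReal.div_top, add_zero] using
      (ENNReal.Tendsto.const_div (tendsto_id (x := 𝓝 ⊤)) (.inr hwx)).const_add (w x / v x)
  filter_upwards [nhdsWithin_le_nhds (hlim.eventually_lt_const hb), self_mem_nhdsWithin,
    nhdsWithin_le_nhds (eventually_ne_nhds ENNReal.top_ne_zero)] with t htb ht ht₀
  exact (superlevelInf_div_le_ratio_add hv hw hx ht ht₀).trans_lt htb

theorem tendsto_superlevelInf_div (hv : ∀ x y, v x + v y ≤ v (x * y))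
    (hw : ∀ x y, w (x * y) ≤ w x + w y) (hvw : ∀ x, v x = ⊤ → w x = ⊤) :
    Tendsto (fun t => superlevelInf v w t / t) (𝓝[≠] ⊤)
      (𝓝 (⨅ x ∈ {x : M | 0 < v x ∧ v x < ⊤}, w x / v x)) := by
  refine tendsto_order.2 ⟨fun a ha => ?_, fun b hb => ?_⟩
  · filter_upwards [self_mem_nhdsWithin,
      nhdsWithin_le_nhds (eventually_ne_nhds ENNReal.top_ne_zero)] with t ht ht₀
    exact ha.trans_le <| (ENNReal.le_div_iff_mul_le (.inl ht₀) (.inl ht)).2 <|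
      iInf_ratio_mul_le_superlevelInf hvw t
  · obtain ⟨x, ⟨hx, hx_top⟩, hxb⟩ : ∃ x ∈ {x : M | 0 < v x ∧ v x < ⊤}, w x / v x < b := by
      simpa only [iInf_lt_iff, exists_prop] using hb
    exact eventually_superlevelInf_div_lt hv hw hx.ne' hx_top.ne hxb

end Ratio

theorem tendsto_ofReal_atTop_nhdsNE_top : Tendsto ENNReal.ofReal atTop (𝓝[≠] ⊤) :=
  tendsto_nhdsWithin_iff.2
    ⟨ENNReal.tendsto_ofReal_atTop, .of_forall fun _ => ENNReal.ofReal_ne_top⟩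

theorem tendsto_asymptotic_order_ratio_general {M : Type*} [Mul M] (v w : M → ℝ≥0∞)
    (hv : ∀ x y : M, v x + v y ≤ v (x * y))
    (hw : ∀ x y : M, w (x * y) ≤ w x + w y)
    (hvw : ∀ x : M, v x = ⊤ → w x = ⊤) :
    Tendsto (fun m : ℝ => (⨅ x ∈ {x : M | ENNReal.ofReal m ≤ v x}, w x) / ENNReal.ofReal m)
      atTop
      (nhds (⨅ x ∈ {x : M | 0 < v x ∧ v x < ⊤}, w x / v x)) :=
  (tendsto_superlevelInf_div hv hw hvw).comp tendsto_ofReal_atTop_nhdsNE_top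

/-- Let `M` be a commutative monoid and `v w : M → [0,∞]` additive-to-multiplication
functions (`v (x*y) = v x + v y` and likewise for `w`) such that `w x = ∞` whenever
`v x = ∞`.  Then `lim_{m→∞} (1/m) ⨅ {w x : v x ≥ m}` equals
`⨅ {w x / v x : 0 < v x < ∞}`, computed in `[0,∞]` (with `⨅ ∅ = ∞`). -/
theorem tendsto_asymptotic_order_ratio
    {M : Type*} [CommMonoid M] (v w : M → ℝ≥0∞)
    (hv : ∀ x y : M, v (x * y) = v x + v y)
    (hw : ∀ x y : M, w (x * y) = w x + w y)
    (hvw : ∀ x : M, v x = ⊤ → w x = ⊤) :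
    Tendsto (fun m : ℝ => (⨅ x ∈ {x : M | ENNReal.ofReal m ≤ v x}, w x) / ENNReal.ofReal m)
      atTop
      (nhds (⨅ x ∈ {x : M | 0 < v x ∧ v x < ⊤}, w x / v x)) :=
  tendsto_asymptotic_order_ratio_general v w (fun x y => (hv x y).ge) (fun x y => (hw x y).le) hvw
end

section
/- Let R be any type and w : R → [0,∞] any function. Equip the space V of all functions v : R → [0,∞] with the product topology (the topology of pointwise convergence). Then the function Ψ : V → [0,∞] defined by Ψ(v) = ⨅{ w(f)/v(f) : f ∈ R, 0 < v(f) < ∞ } (division in [0,∞], with ⨅ of the empty set equal to ∞) is upper semicontinuous. -/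
/-!
For each `f`, the ratio `w f / t` is continuous in `t` on the open set `0 < t < ∞`, and replacing
its values outside this open set by `∞` leaves it upper semicontinuous. Composing with evaluation at
`f` and taking the infimum over `f` both preserve upper semicontinuity.
-/

open scoped ENNReal

theorem upperSemicontinuous_iInf_mem_of_isOpen {X α : Type*} [TopologicalSpace X]
    [CompleteLattice α] {U : Set X} {g : X → α} (hU : IsOpen U) (hg : UpperSemicontinuousOn g U) :
    UpperSemicontinuous fun x ↦ ⨅ _ : x ∈ U, g x := by
  intro x y (hxy : ⨅ _ : x ∈ U, g x < y)
  by_cases hx : x ∈ U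
  · have hlt : g x < y := by rwa [iInf_pos hx] at hxy
    have hlt_nhds : ∀ᶠ x' in nhds x, g x' < y := hU.nhdsWithin_eq hx ▸ hg x hx y hlt
    filter_upwards [hU.mem_nhds hx, hlt_nhds] with x' hx' hlt'
    rwa [iInf_pos hx']
  · rw [iInf_neg hx] at hxy
    exact absurd hxy not_top_lt

theorem continuousOn_ennreal_const_div (c : ℝ≥0∞) : ContinuousOn (fun t ↦ c / t) {⊤}ᶜ :=
  continuousOn_of_forall_continuousAt fun _ ht ↦
    ENNReal.Tendsto.const_div Filter.tendsto_id (.inl ht)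

/-- Let `R` be any type and `w : R → [0,∞]` any function.  On the space of all
functions `v : R → [0,∞]` with the product (pointwise convergence) topology, the
function `Ψ v = ⨅ {w f / v f : f ∈ R, 0 < v f < ∞}` (with `⨅ ∅ = ∞`) is upper
semicontinuous. -/
theorem upperSemicontinuous_iInf_ratio
    (R : Type*) (w : R → ℝ≥0∞) :
    UpperSemicontinuous
      (fun v : R → ℝ≥0∞ => ⨅ f ∈ {f : R | 0 < v f ∧ v f < ⊤}, w f / v f) := by
  refine upperSemicontinuous_iInf fun f ↦ ?_
  have hcont : ContinuousOn (fun t ↦ w f / t) (Set.Ioo 0 ⊤) :=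
    (continuousOn_ennreal_const_div (w f)).mono fun _ ht ↦ ht.2.ne
  have husc : UpperSemicontinuous fun t ↦ ⨅ _ : t ∈ Set.Ioo 0 ⊤, w f / t :=
    upperSemicontinuous_iInf_mem_of_isOpen isOpen_Ioo hcont.upperSemicontinuousOn
  exact husc.comp (continuous_apply f)
end

section
/- Let c be a natural number and u : Fin c → ℝ a fixed nonnegative weight vector. The function assigning to each w : Fin c → ℝ with all coordinates positive the limit lim_{m→∞} G_{u,w}(m)/m, where G_{u,w}(m) = inf{ Σ_i u(i)·α(i) : α : Fin c → ℕ, Σ_i w(i)·α(i) ≥ m }, is continuous on the set { w : ∀ i, w(i) > 0 } (and is given there by w ↦ min_i u(i)/w(i)). -/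
open Filter

/-- `toricG u w m` is the infimum of the `u`-weight `∑ i, u i * α i` over all lattice
points `α : Fin c → ℕ` satisfying `∑ i, w i * α i ≥ m`. -/
noncomputable def toricG {c : ℕ} (u w : Fin c → ℝ) (m : ℝ) : ℝ :=
  sInf {x : ℝ | ∃ α : Fin c → ℕ, m ≤ ∑ i, w i * (α i : ℝ) ∧ x = ∑ i, u i * (α i : ℝ)}

/-!
Let `r = min_i u i / w i`, attained at `j`. Since `r * w i ≤ u i` for all `i`, every admissible `α`
has `u`-weight at least `r * m`. Conversely `⌈m / w j⌉₊` times the `j`-th basis vector is admissible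
and has `u`-weight at most `r * m + u j`. Hence `toricG u w m / m` lies in `[r, r + u j / m]` for
`m > 0` and tends to `r`. A finite minimum of continuous functions is continuous.
-/

lemma sum_mul_natCast_single {ι R : Type*} [Fintype ι] [DecidableEq ι] [NonAssocSemiring R]
    (v : ι → R) (j : ι) (n : ℕ) :
    ∑ i, v i * ((Pi.single j n : ι → ℕ) i : R) = v j * n := by
  simp [Pi.single_apply]

lemma le_sum_mul_natCast_single_ceil {ι K : Type*} [Fintype ι] [DecidableEq ι] [Semifield K]
    [LinearOrder K] [IsStrictOrderedRing K] [FloorSemiring K] {w : ι → K} {j : ι}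
    (hj : 0 < w j) (m : K) :
    m ≤ ∑ i, w i * ((Pi.single j ⌈m / w j⌉₊ : ι → ℕ) i : K) := by
  rw [sum_mul_natCast_single, ← div_le_iff₀' hj]
  exact Nat.le_ceil _

lemma continuousOn_iInf_div {ι : Type*} [Finite ι] (u : ι → ℝ) :
    ContinuousOn (fun w : ι → ℝ => ⨅ i, u i / w i) {w | ∀ i, w i ≠ 0} := by
  have := Fintype.ofFinite ι
  rcases isEmpty_or_nonempty ι with _ | _
  · simp only [Real.iInf_of_isEmpty]
    exact continuousOn_const
  · simp only [← Finset.inf'_univ_eq_ciInf]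
    exact ContinuousOn.finset_inf'_apply _ fun i _ =>
      continuousOn_const.div (continuous_apply i).continuousOn fun _ hw => hw i

section toricG

variable {c : ℕ} {u w : Fin c → ℝ} {m : ℝ} {j : Fin c}

lemma toricG_of_isEmpty [IsEmpty (Fin c)] : toricG u w m = 0 := by
  -- For `0 < m` no point is admissible, and the value is the convention `sInf ∅ = 0`.
  by_cases hm : m ≤ 0 <;> simp [toricG, hm]

lemma mul_le_toricG {r : ℝ} (hr : 0 ≤ r) (hrw : ∀ i, r * w i ≤ u i)
    (hne : ∃ α : Fin c → ℕ, m ≤ ∑ i, w i * (α i : ℝ)) : r * m ≤ toricG u w m := by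
  obtain ⟨β, hβ⟩ := hne
  refine le_csInf ⟨_, β, hβ, rfl⟩ ?_
  rintro x ⟨α, hα, rfl⟩
  calc r * m ≤ r * ∑ i, w i * (α i : ℝ) := by gcongr
    _ = ∑ i, r * w i * (α i : ℝ) := by simp only [Finset.mul_sum, mul_assoc]
    _ ≤ ∑ i, u i * (α i : ℝ) := by gcongr with i; exact hrw i

lemma toricG_le_sum (hu : ∀ i, 0 ≤ u i) {α : Fin c → ℕ} (hα : m ≤ ∑ i, w i * (α i : ℝ)) :
    toricG u w m ≤ ∑ i, u i * (α i : ℝ) := by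
  refine csInf_le ⟨0, ?_⟩ ⟨α, hα, rfl⟩
  rintro x ⟨β, -, rfl⟩
  exact Finset.sum_nonneg fun i _ => mul_nonneg (hu i) (Nat.cast_nonneg _)

lemma toricG_le_div_mul_add (hu : ∀ i, 0 ≤ u i) (hj : 0 < w j) (hm : 0 ≤ m) :
    toricG u w m ≤ u j / w j * m + u j :=
  calc toricG u w m
      ≤ ∑ i, u i * ((Pi.single j ⌈m / w j⌉₊ : Fin c → ℕ) i : ℝ) :=
        toricG_le_sum hu (le_sum_mul_natCast_single_ceil hj m)
    _ = u j * ⌈m / w j⌉₊ := sum_mul_natCast_single ..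
    _ ≤ u j * (m / w j + 1) :=
        mul_le_mul_of_nonneg_left (Nat.ceil_lt_add_one (div_nonneg hm hj.le)).le (hu j)
    _ = u j / w j * m + u j := by ring

lemma tendsto_toricG_div_of_forall_div_mul_le (hu : ∀ i, 0 ≤ u i) (hj : 0 < w j)
    (hmin : ∀ i, u j / w j * w i ≤ u i) :
    Tendsto (fun m => toricG u w m / m) atTop (nhds (u j / w j)) := by
  have hupper : Tendsto (fun m => u j / w j + u j / m) atTop (nhds (u j / w j)) := by
    simpa only [id, add_zero] using (tendsto_id.const_div_atTop (u j)).const_add (u j / w j)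
  refine tendsto_of_tendsto_of_tendsto_of_le_of_le' tendsto_const_nhds hupper ?_ ?_
  · filter_upwards [eventually_gt_atTop 0] with m hm
    rw [le_div_iff₀ hm]
    exact mul_le_toricG (div_nonneg (hu j) hj.le) hmin ⟨_, le_sum_mul_natCast_single_ceil hj m⟩
  · filter_upwards [eventually_gt_atTop 0] with m hm
    rw [div_le_iff₀ hm, add_mul, div_mul_cancel₀ _ hm.ne']
    exact toricG_le_div_mul_add hu hj hm.le

lemma tendsto_toricG_div (hu : ∀ i, 0 ≤ u i) (hw : ∀ i, 0 < w i) :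
    Tendsto (fun m => toricG u w m / m) atTop (nhds (⨅ i, u i / w i)) := by
  rcases isEmpty_or_nonempty (Fin c) with _ | _
  · simp only [toricG_of_isEmpty, zero_div, Real.iInf_of_isEmpty]
    exact tendsto_const_nhds
  · obtain ⟨j, hj⟩ := exists_eq_ciInf_of_finite (f := fun i => u i / w i)
    have hmin (i : Fin c) : u j / w j * w i ≤ u i := by
      rw [← le_div_iff₀ (hw i), hj]
      exact ciInf_le (Set.finite_range _).bddBelow i
    rw [← hj]
    exact tendsto_toricG_div_of_forall_div_mul_le hu (hw j) hmin

end toricG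

/-- Let `u : Fin c → ℝ` be a fixed nonnegative weight vector.  The function assigning
to each strictly positive `w` the limit `lim_{m→∞} toricG u w m / m` is given there by
`w ↦ min_i (u i / w i)` and is continuous on the open positive orthant. -/
theorem toric_asymptotic_order_continuousOn
    {c : ℕ} (u : Fin c → ℝ) (hu : ∀ i, 0 ≤ u i) :
    (∀ w : Fin c → ℝ, (∀ i, 0 < w i) →
      Tendsto (fun m : ℝ => toricG u w m / m) atTop (nhds (⨅ i : Fin c, u i / w i))) ∧
    ContinuousOn (fun w : Fin c → ℝ => ⨅ i : Fin c, u i / w i)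
      {w : Fin c → ℝ | ∀ i, 0 < w i} :=
  ⟨fun _ hw => tendsto_toricG_div hu hw,
    (continuousOn_iInf_div u).mono fun _ hw i => (hw i).ne'⟩
end
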